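/- arXiv:2312.10710 — 2 statements merged into one kernel-verified Lean document; each statement's English description precedes it below -/
import Mathlib

section
/- For real parameters θ¹, θ² with θ¹+θ² > 0 and θ¹−θ² > 0, the variance of the beta-logistic distribution is ∫_{ℝ} (x − μ)² · p(x;θ¹,θ²) dx = (1/4)·(ψ'((θ¹+θ²)/2) + ψ'((θ¹−θ²)/2)), where μ = (1/2)·(ψ((θ¹+θ²)/2) − ψ((θ¹−θ²)/2)). This is the (2,2) entry g₂₂ of the Fisher information matrix of the family. -/
open MeasureTheory

/-- The hyperbolic secant function: `sech x = 2 / (eˣ + e⁻ˣ)`. -/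
noncomputable def sech (x : ℝ) : ℝ := 1 / Real.cosh x

/-- The beta-logistic density. -/
noncomputable def betaLogisticPDF (θ1 θ2 x : ℝ) : ℝ :=
  (2 : ℝ) ^ (1 - θ1) * sech x ^ θ1 * Real.exp (θ2 * x) /
    (Real.Gamma ((θ1 - θ2) / 2) * Real.Gamma ((θ1 + θ2) / 2) / Real.Gamma θ1)

/-- The digamma function `ψ(z) = d/dz log Γ(z)`. -/
noncomputable def digamma (z : ℝ) : ℝ := deriv (fun x => Real.log (Real.Gamma x)) z

/-- The trigamma function `ψ'(z) = d²/dz² log Γ(z)`. -/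
noncomputable def trigamma (z : ℝ) : ℝ := iteratedDeriv 2 (fun x => Real.log (Real.Gamma x)) z

open ProbabilityTheory Filter Topology in
lemma blv_beta_integral (a b : ℝ) (ha : 0 < a) (hb : 0 < b) :
    ∫ x in Set.Ioo (0:ℝ) 1, x ^ (a - 1) * (1 - x) ^ (b - 1) = beta a b := by
  rw [beta_eq_betaIntegralReal a b ha hb, Complex.betaIntegral,
    intervalIntegral.integral_of_le zero_le_one, integral_Ioc_eq_integral_Ioo]
  have : ∫ x in Set.Ioo (0:ℝ) 1, (x:ℂ) ^ ((a:ℂ) - 1) * (1 - (x:ℂ)) ^ ((b:ℂ) - 1)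
      = ∫ x in Set.Ioo (0:ℝ) 1, ((x ^ (a - 1) * (1 - x) ^ (b - 1) : ℝ) : ℂ) := by
    refine setIntegral_congr_fun measurableSet_Ioo fun x hx => ?_
    simp only [Complex.ofReal_mul]
    rw [Complex.ofReal_cpow hx.1.le, Complex.ofReal_cpow (by linarith [hx.2])]
    push_cast
    rfl
  rw [this, integral_complex_ofReal, Complex.ofReal_re]

lemma blv_sech_pos (x : ℝ) : 0 < sech x := one_div_pos.mpr (Real.cosh_pos x)

lemma blv_pointwise (s t x : ℝ) :
    |2 * (Real.sigmoid (2 * x) * (1 - Real.sigmoid (2 * x)))| •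
      ((Real.sigmoid (2 * x)) ^ ((s + t) / 2 - 1) * (1 - Real.sigmoid (2 * x)) ^ ((s - t) / 2 - 1))
      = (2:ℝ) ^ (1 - s) * (sech x ^ s * Real.exp (t * x)) := by
  have hp := Real.sigmoid_pos (2 * x)
  have hq : 0 < 1 - Real.sigmoid (2 * x) := sub_pos.mpr (Real.sigmoid_lt_one _)
  have hs := blv_sech_pos x
  have e1 : Real.sigmoid (2 * x) = Real.exp x * (sech x / 2) := by
    rw [Real.sigmoid_def, sech, Real.cosh_eq]
    have : Real.exp (-(2 * x)) = Real.exp (-x) * Real.exp (-x) := by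
      rw [← Real.exp_add]; ring_nf
    rw [this, Real.exp_neg]
    have := Real.exp_pos x
    field_simp
  have e2 : 1 - Real.sigmoid (2 * x) = Real.exp (-x) * (sech x / 2) := by
    rw [e1, sech, Real.cosh_eq, Real.exp_neg]
    have := Real.exp_pos x
    field_simp
    ring
  rw [abs_of_pos (by positivity), smul_eq_mul]
  have : 2 * (Real.sigmoid (2 * x) * (1 - Real.sigmoid (2 * x))) *
      ((Real.sigmoid (2 * x)) ^ ((s + t) / 2 - 1) * (1 - Real.sigmoid (2 * x)) ^ ((s - t) / 2 - 1))
      = 2 * ((Real.sigmoid (2 * x)) ^ ((s + t) / 2) * (1 - Real.sigmoid (2 * x)) ^ ((s - t) / 2)) := by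
    rw [Real.rpow_sub_one hp.ne', Real.rpow_sub_one hq.ne']
    field_simp
  rw [this, e2, e1, Real.mul_rpow (Real.exp_pos _).le (by positivity),
    Real.mul_rpow (Real.exp_pos _).le (by positivity), ← Real.exp_mul, ← Real.exp_mul]
  have h3 : (sech x / 2) ^ ((s + t) / 2) * (sech x / 2) ^ ((s - t) / 2) = sech x ^ s / 2 ^ s := by
    rw [← Real.rpow_add (by positivity), ← Real.div_rpow hs.le (by norm_num)]
    ring_nf
  have h4 : Real.exp (x * ((s + t) / 2)) * Real.exp (-x * ((s - t) / 2)) = Real.exp (t * x) := by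
    rw [← Real.exp_add]; ring_nf
  rw [Real.rpow_sub (by norm_num), Real.rpow_one, ← h4]
  linear_combination (2 * Real.exp (x * ((s + t) / 2)) * Real.exp (-x * ((s - t) / 2))) * h3

lemma blv_integral (s t : ℝ) (h1 : 0 < s + t) (h2 : 0 < s - t) :
    (2:ℝ) ^ (1 - s) * ∫ x : ℝ, sech x ^ s * Real.exp (t * x) =
      Real.Gamma ((s - t) / 2) * Real.Gamma ((s + t) / 2) / Real.Gamma s := by
  have hb := blv_beta_integral ((s + t) / 2) ((s - t) / 2) (by linarith) (by linarith)
  have hr : (fun x : ℝ => Real.sigmoid (2 * x)) '' Set.univ = Set.Ioo 0 1 := by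
    rw [Set.image_univ, ← Real.range_sigmoid]
    exact (mul_left_surjective₀ (two_ne_zero' ℝ)).range_comp Real.sigmoid
  have hd : ∀ x ∈ Set.univ, HasDerivWithinAt (fun x : ℝ => Real.sigmoid (2 * x))
      (2 * (Real.sigmoid (2 * x) * (1 - Real.sigmoid (2 * x)))) Set.univ x := by
    intro x _
    have := (Real.hasDerivAt_sigmoid (2 * x)).comp x ((hasDerivAt_id x).const_mul 2)
    refine (this.congr_deriv ?_).hasDerivWithinAt
    ring
  have hi : Set.InjOn (fun x : ℝ => Real.sigmoid (2 * x)) Set.univ := by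
    intro x _ y _ h
    have := Real.sigmoid_injective h
    linarith
  rw [← hr, integral_image_eq_integral_abs_deriv_smul MeasurableSet.univ hd hi] at hb
  simp only [blv_pointwise, Measure.restrict_univ] at hb
  rw [integral_const_mul] at hb
  rw [hb, ProbabilityTheory.beta]
  ring_nf

lemma blv_logGamma_analytic (z : ℝ) (hz : 0 < z) :
    AnalyticAt ℝ (fun x => Real.log (Real.Gamma x)) z := by
  have hG : AnalyticAt ℝ Real.Gamma z := by
    have hc : AnalyticAt ℂ Complex.Gamma (z : ℂ) := by
      have hopen : IsOpen {w : ℂ | 0 < w.re} := isOpen_lt continuous_const Complex.continuous_re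
      have hd : DifferentiableOn ℂ Complex.Gamma {w : ℂ | 0 < w.re} := by
        intro w hw
        refine (Complex.differentiableAt_Gamma w ?_).differentiableWithinAt
        intro m hm
        have h0 : 0 < w.re := hw
        rw [hm] at h0
        simp at h0
        have : (0:ℝ) ≤ m := Nat.cast_nonneg m
        linarith
      exact hd.analyticAt (hopen.mem_nhds (by simpa using hz))
    exact hc.re_ofReal
  exact hG.log (Real.Gamma_pos_of_pos hz)

lemma blv_hasDeriv (z : ℝ) (hz : 0 < z) :
    HasDerivAt (fun x => Real.log (Real.Gamma x)) (digamma z) z :=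
  (blv_logGamma_analytic z hz).differentiableAt.hasDerivAt

lemma blv_hasDeriv2 (z : ℝ) (hz : 0 < z) : HasDerivAt digamma (trigamma z) z := by
  have := (blv_logGamma_analytic z hz).deriv.differentiableAt.hasDerivAt
  rw [trigamma, iteratedDeriv_succ, iteratedDeriv_one]
  exact this

/-- The variance of the beta-logistic distribution is
`(1/4)(ψ'((θ¹+θ²)/2) + ψ'((θ¹−θ²)/2))`, where the mean is
`μ = (1/2)(ψ((θ¹+θ²)/2) − ψ((θ¹−θ²)/2))`.  This is the Fisher metric entry `g₂₂`. -/
theorem betaLogistic_variance (θ1 θ2 μ : ℝ) (h1 : 0 < θ1 + θ2) (h2 : 0 < θ1 - θ2)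
    (hμ : μ = (1 / 2) * (digamma ((θ1 + θ2) / 2) - digamma ((θ1 - θ2) / 2))) :
    (∫ x : ℝ, (x - μ) ^ 2 * betaLogisticPDF θ1 θ2 x) =
      (1 / 4) * (trigamma ((θ1 + θ2) / 2) + trigamma ((θ1 - θ2) / 2)) := by
  have hpos : ∀ x, 0 ≤ sech x ^ θ1 := fun x => (Real.rpow_pos_of_pos (blv_sech_pos x) _).le
  have hmeas : Measurable fun x => ENNReal.ofReal (sech x ^ θ1) := by
    unfold sech
    fun_prop
  have hlt : ∀ᵐ x : ℝ, ENNReal.ofReal (sech x ^ θ1) < ⊤ := by simp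
  set ν : Measure ℝ := volume.withDensity (fun x => ENNReal.ofReal (sech x ^ θ1)) with hν
  have hint : ∀ g : ℝ → ℝ, ∫ x, g x ∂ν = ∫ x, sech x ^ θ1 * g x := by
    intro g
    rw [hν, integral_withDensity_eq_integral_toReal_smul hmeas hlt]
    simp [ENNReal.toReal_ofReal (hpos _)]
  have hmgf : ∀ t, 0 < θ1 + t → 0 < θ1 - t → ProbabilityTheory.mgf id ν t =
      (2:ℝ) ^ (θ1 - 1) *
        (Real.Gamma ((θ1 - t) / 2) * Real.Gamma ((θ1 + t) / 2) / Real.Gamma θ1) := by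
    intro t ha hb
    rw [← blv_integral θ1 t ha hb, ProbabilityTheory.mgf, hint, ← mul_assoc,
      ← Real.rpow_add (by norm_num)]
    simp
  have hθ : 0 < θ1 := by linarith
  have hGpos : ∀ t, 0 < θ1 + t → 0 < θ1 - t → 0 < Real.Gamma ((θ1 - t) / 2) ∧
      0 < Real.Gamma ((θ1 + t) / 2) ∧ 0 < Real.Gamma θ1 := fun t ha hb =>
    ⟨Real.Gamma_pos_of_pos (by linarith), Real.Gamma_pos_of_pos (by linarith),
      Real.Gamma_pos_of_pos hθ⟩
  have hsub : Set.Ioo (-θ1) θ1 ⊆ ProbabilityTheory.integrableExpSet id ν := by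
    intro t ht
    have ha : 0 < θ1 + t := by linarith [ht.1]
    have hb : 0 < θ1 - t := by linarith [ht.2]
    obtain ⟨g1, g2, g3⟩ := hGpos t ha hb
    by_contra hcon
    have h0 : ProbabilityTheory.mgf id ν t = 0 := integral_undef hcon
    rw [hmgf t ha hb] at h0
    have : 0 < (2:ℝ) ^ (θ1 - 1) *
        (Real.Gamma ((θ1 - t) / 2) * Real.Gamma ((θ1 + t) / 2) / Real.Gamma θ1) := by positivity
    linarith
  have hmem : θ2 ∈ interior (ProbabilityTheory.integrableExpSet id ν) :=
    interior_maximal hsub isOpen_Ioo ⟨by linarith, by linarith⟩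
  have hcgf : ∀ t ∈ Set.Ioo (-θ1) θ1, ProbabilityTheory.cgf id ν t =
      Real.log ((2:ℝ) ^ (θ1 - 1)) + (Real.log (Real.Gamma ((θ1 - t) / 2)) +
        Real.log (Real.Gamma ((θ1 + t) / 2)) - Real.log (Real.Gamma θ1)) := by
    intro t ht
    have ha : 0 < θ1 + t := by linarith [ht.1]
    have hb : 0 < θ1 - t := by linarith [ht.2]
    obtain ⟨g1, g2, g3⟩ := hGpos t ha hb
    rw [ProbabilityTheory.cgf, hmgf t ha hb, Real.log_mul (by positivity) (by positivity),
      Real.log_div (by positivity) g3.ne', Real.log_mul g1.ne' g2.ne']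
  have hl : ∀ t, HasDerivAt (fun t : ℝ => (θ1 - t) / 2) (-1 / 2) t := fun t =>
    ((hasDerivAt_id t).const_sub θ1).div_const 2
  have hr : ∀ t, HasDerivAt (fun t : ℝ => (θ1 + t) / 2) (1 / 2) t := fun t =>
    ((hasDerivAt_id t).const_add θ1).div_const 2
  have hd : ∀ t ∈ Set.Ioo (-θ1) θ1, deriv (ProbabilityTheory.cgf id ν) t =
      (1 / 2) * (digamma ((θ1 + t) / 2) - digamma ((θ1 - t) / 2)) := by
    intro t ht
    have ha : 0 < (θ1 + t) / 2 := by linarith [ht.1]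
    have hb : 0 < (θ1 - t) / 2 := by linarith [ht.2]
    have he : ProbabilityTheory.cgf id ν =ᶠ[nhds t] fun t =>
      Real.log ((2:ℝ) ^ (θ1 - 1)) + (Real.log (Real.Gamma ((θ1 - t) / 2)) +
        Real.log (Real.Gamma ((θ1 + t) / 2)) - Real.log (Real.Gamma θ1)) := by
      filter_upwards [isOpen_Ioo.mem_nhds ht] with u hu using hcgf u hu
    rw [he.deriv_eq]
    have k1 := (blv_hasDeriv _ hb).comp t (hl t)
    have k2 := (blv_hasDeriv _ ha).comp t (hr t)
    refine (((k1.add k2).sub_const (Real.log (Real.Gamma θ1))).const_add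
      (Real.log ((2:ℝ) ^ (θ1 - 1)))).deriv.trans ?_
    ring
  have hθ2 : θ2 ∈ Set.Ioo (-θ1) θ1 := ⟨by linarith, by linarith⟩
  have hdd : iteratedDeriv 2 (ProbabilityTheory.cgf id ν) θ2 =
      (1 / 4) * (trigamma ((θ1 + θ2) / 2) + trigamma ((θ1 - θ2) / 2)) := by
    have he : deriv (ProbabilityTheory.cgf id ν) =ᶠ[nhds θ2] fun t =>
        (1 / 2) * (digamma ((θ1 + t) / 2) - digamma ((θ1 - t) / 2)) := by
      filter_upwards [isOpen_Ioo.mem_nhds hθ2] with u hu using hd u hu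
    rw [iteratedDeriv_succ, iteratedDeriv_one, he.deriv_eq]
    have k1 := (blv_hasDeriv2 ((θ1 - θ2) / 2) (by linarith)).comp θ2 (hl θ2)
    have k2 := (blv_hasDeriv2 ((θ1 + θ2) / 2) (by linarith)).comp θ2 (hr θ2)
    refine ((k2.sub k1).const_mul (1 / 2 : ℝ)).deriv.trans ?_
    ring
  rw [← hdd, ProbabilityTheory.iteratedDeriv_two_cgf_eq_integral hmem, hd θ2 hθ2, ← hμ, hint,
    hmgf θ2 h1 h2, ← integral_div]
  refine integral_congr_ae (Filter.Eventually.of_forall fun x => ?_)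
  obtain ⟨g1, g2, g3⟩ := hGpos θ2 h1 h2
  have h2p : (0:ℝ) < (2:ℝ) ^ (θ1 - 1) := by positivity
  have h2e : (2:ℝ) ^ (1 - θ1) = ((2:ℝ) ^ (θ1 - 1))⁻¹ := by
    rw [← Real.rpow_neg (by norm_num)]; ring_nf
  simp only [betaLogisticPDF, h2e, id]
  field_simp
end

section
/- For every natural number n and every real x, the n-th Bernoulli polynomial satisfies B_n(x) = (π/2) · ∫_{ℝ} (x + i t − 1/2)^n · sech²(π t) dt, where the integral is a convergent complex-valued integral over the real line. -/
open MeasureTheory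

/-- The `n`-th Bernoulli polynomial evaluated at a real `x` (generating function
`Σ Bₙ(x) tⁿ/n! = t e^{xt}/(eᵗ − 1)`). -/
noncomputable def bernoulliPoly (n : ℕ) (x : ℝ) : ℝ :=
  Polynomial.aeval x (Polynomial.bernoulli n)

open Polynomial

lemma bern_iter (n k : ℕ) (h : k ≤ n) : (derivative^[k]) (Polynomial.bernoulli n) =
    (n.descFactorial k : ℚ[X]) * Polynomial.bernoulli (n - k) := by
  induction k with
  | zero => simp
  | succ k ih =>
    rw [Function.iterate_succ_apply', ih (by omega), Nat.descFactorial_succ,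
      Polynomial.derivative_natCast_mul, Polynomial.derivative_bernoulli, Nat.sub_sub]
    push_cast
    ring

lemma bern_hasse (n k : ℕ) (h : k ≤ n) : hasseDeriv k (Polynomial.bernoulli n) =
    (n.choose k : ℚ[X]) * Polynomial.bernoulli (n - k) := by
  have h1 := congrFun (factorial_smul_hasseDeriv (R := ℚ) (k := k)) (Polynomial.bernoulli n)
  rw [bern_iter n k h, Nat.descFactorial_eq_factorial_mul_choose] at h1
  have : (k.factorial : ℚ[X]) ≠ 0 := by exact_mod_cast k.factorial_ne_zero
  apply mul_left_cancel₀ this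
  rw [LinearMap.smul_apply, nsmul_eq_mul] at h1
  rw [h1]; push_cast; ring

lemma bern_taylor (n : ℕ) (x : ℝ) : aeval x (Polynomial.bernoulli n) =
    ∑ m ∈ Finset.range (n + 1), (n.choose m : ℝ) * (x - 1/2) ^ m *
      (((Polynomial.bernoulli (n - m)).eval (1/2 : ℚ) : ℚ) : ℝ) := by
  have h0 : Polynomial.bernoulli n = ∑ m ∈ Finset.range (n + 1),
      C (((n.choose m : ℚ)) * (Polynomial.bernoulli (n - m)).eval (1/2 : ℚ)) * (X - C (1/2)) ^ m := by
    conv_lhs => rw [← sum_taylor_eq (Polynomial.bernoulli n) (1/2)]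
    rw [Polynomial.sum_over_range' _ (by simp) (n + 1)]
    · refine Finset.sum_congr rfl fun m hm => ?_
      rw [taylor_coeff, bern_hasse n m (by simp at hm; omega)]
      simp
    · rw [natDegree_taylor]
      rw [Nat.lt_succ_iff, Polynomial.bernoulli]
      refine natDegree_sum_le_of_forall_le _ _ fun i _ => ?_
      exact (natDegree_monomial_le _).trans (by omega)
  conv_lhs => rw [h0]
  simp only [map_sum, map_mul, map_pow, map_sub, aeval_C, aeval_X]
  refine Finset.sum_congr rfl fun m hm => ?_
  simp
  ring

lemma sech_cont : Continuous (fun t : ℝ => sech (Real.pi * t) ^ 2) := by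
  unfold sech
  have : ∀ t : ℝ, Real.cosh (Real.pi * t) ≠ 0 := fun t => (Real.cosh_pos _).ne'
  fun_prop (disch := assumption)

lemma sech_eq (t : ℝ) : sech (Real.pi * t) ^ 2 =
    4 * (Real.exp (-(2 * Real.pi * t)) / (1 + Real.exp (-(2 * Real.pi * t))) ^ 2) := by
  have : Real.exp (-(2 * Real.pi * t)) = Real.exp (-(Real.pi * t)) ^ 2 := by
    rw [← Real.exp_nat_mul]; congr 1; push_cast; ring
  rw [sech, Real.cosh_eq, this]
  have h : Real.exp (Real.pi * t) = 1 / Real.exp (-(Real.pi * t)) := by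
    rw [Real.exp_neg]; simp
  rw [h]
  have := Real.exp_pos (-(Real.pi * t))
  field_simp
  ring

lemma sech_le (t : ℝ) : sech (Real.pi * t) ^ 2 ≤ 4 * Real.exp (-(2 * Real.pi * t)) := by
  rw [sech_eq]
  have := Real.exp_pos (-(2 * Real.pi * t))
  gcongr
  apply div_le_self this.le
  nlinarith

lemma gam_int (j : ℕ) {b : ℝ} (hb : 0 < b) :
    IntegrableOn (fun t : ℝ => t ^ j * Real.exp (-(b * t))) (Set.Ioi 0) := by
  have := integrableOn_rpow_mul_exp_neg_mul_rpow (p := 1) (s := j) (b := b)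
    (by have : (0:ℝ) ≤ j := by positivity
        linarith) one_pos hb
  simpa using this

lemma gam_val (j : ℕ) {b : ℝ} (hb : 0 < b) :
    ∫ t in Set.Ioi (0:ℝ), t ^ j * Real.exp (-(b * t)) = (1 / b) ^ (j + 1) * j.factorial := by
  have := Real.integral_rpow_mul_exp_neg_mul_Ioi (a := (j:ℝ) + 1) (r := b) (by positivity) hb
  rw [Real.Gamma_nat_eq_factorial] at this
  rw [show (1 / b) ^ ((j:ℝ) + 1) = (1 / b) ^ (j + 1) by exact_mod_cast Real.rpow_natCast (1/b) (j+1)] at this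
  rw [← this]
  simp

lemma mom_int (j : ℕ) : Integrable (fun t : ℝ => t ^ j * sech (Real.pi * t) ^ 2) := by
  have hc : Continuous (fun t : ℝ => t ^ j * sech (Real.pi * t) ^ 2) :=
    (continuous_pow j).mul sech_cont
  refine hc.locallyIntegrable.integrable_of_isBigO_atTop_of_norm_isNegInvariant
    (g := fun t : ℝ => t ^ j * Real.exp (-(2 * Real.pi * t))) ?_ ?_ ?_
  · refine Filter.Eventually.of_forall fun t => ?_
    simp [sech]
  · refine Asymptotics.IsBigO.of_bound 4 (Filter.Eventually.of_forall fun t => ?_)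
    rw [norm_mul, norm_mul, Real.norm_of_nonneg (sq_nonneg _), Real.norm_of_nonneg (Real.exp_pos _).le]
    nlinarith [mul_le_mul_of_nonneg_left (sech_le t) (norm_nonneg (t ^ j))]
  · exact ⟨Set.Ioi 0, Filter.Ioi_mem_atTop 0, gam_int j (by positivity)⟩

lemma mom_zero : ∫ t : ℝ, sech (Real.pi * t) ^ 2 = 2 / Real.pi := by
  have hi : Integrable (fun t : ℝ => sech (Real.pi * t) ^ 2) := by simpa using mom_int 0
  have hl : Filter.Tendsto (fun t : ℝ => 2 * Real.pi * t) Filter.atTop Filter.atTop :=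
    Filter.tendsto_id.const_mul_atTop (by positivity)
  have hl' : Filter.Tendsto (fun t : ℝ => 2 * Real.pi * t) Filter.atBot Filter.atBot :=
    Filter.tendsto_id.const_mul_atBot (by positivity)
  have h := integral_of_hasDerivAt_of_tendsto
    (f := fun t : ℝ => (1 / Real.pi) * (1 - 2 * (Real.exp (2 * Real.pi * t) + 1)⁻¹))
    (m := (1 / Real.pi) * (1 - 2 * (0 + 1)⁻¹)) (n := (1 / Real.pi) * (1 - 2 * 0))
    (fun t => ?_) hi ?_ ?_
  · rw [h]; ring
  · have hp := Real.exp_pos (2 * Real.pi * t)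
    have h1 : HasDerivAt (fun t : ℝ => Real.exp (2 * Real.pi * t) + 1)
        (Real.exp (2 * Real.pi * t) * (2 * Real.pi * 1)) t :=
      (((hasDerivAt_id t).const_mul (2 * Real.pi)).exp).add_const 1
    have h2 := (((h1.inv (by positivity)).const_mul 2).const_sub 1).const_mul (1 / Real.pi)
    refine h2.congr_deriv ?_
    rw [sech_eq, Real.exp_neg]
    have := Real.pi_pos
    field_simp
    ring
  · refine Filter.Tendsto.const_mul _ (Filter.Tendsto.const_sub _ (Filter.Tendsto.const_mul _ ?_))
    exact ((Real.tendsto_exp_atBot.comp hl').add_const 1).inv₀ (by norm_num)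
  · refine Filter.Tendsto.const_mul _ (Filter.Tendsto.const_sub _ (Filter.Tendsto.const_mul _ ?_))
    exact (Filter.tendsto_atTop_add_const_right _ _ (Real.tendsto_exp_atTop.comp hl)).inv_tendsto_atTop

lemma mom_even (k : ℕ) (hk : k ≠ 0) :
    ∫ t : ℝ, t ^ (2 * k) * sech (Real.pi * t) ^ 2 =
      2 / Real.pi * ((-1) ^ k * (((Polynomial.bernoulli (2 * k)).eval (1/2 : ℚ) : ℚ) : ℝ)) := by
  have hpi := Real.pi_pos
  have habs : ∫ t : ℝ, t ^ (2 * k) * sech (Real.pi * t) ^ 2 =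
      2 * ∫ t in Set.Ioi (0:ℝ), t ^ (2 * k) * sech (Real.pi * t) ^ 2 := by
    rw [← integral_comp_abs (f := fun t : ℝ => t ^ (2 * k) * sech (Real.pi * t) ^ 2)]
    congr 1; ext t
    rcases abs_choice t with h | h <;> rw [h]
    simp [sech, Even.neg_pow (even_two_mul k)]
  let F : ℕ → ℝ → ℝ := fun m t =>
    (-4 * (-1) ^ m * m) * (t ^ (2 * k) * Real.exp (-(2 * Real.pi * m * t)))
  have hF : ∀ m, IntegrableOn (F m) (Set.Ioi 0) := by
    intro m
    rcases Nat.eq_zero_or_pos m with rfl | hm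
    · simp [F]
    · exact (gam_int (2 * k) (b := 2 * Real.pi * m) (by positivity)).const_mul _
  have hval : ∀ m, ∫ t in Set.Ioi (0:ℝ), F m t =
      -4 * (2 * k).factorial / (2 * Real.pi) ^ (2 * k + 1) * (1 / (m:ℝ) ^ (2 * k) * (-1) ^ m) := by
    intro m
    rcases Nat.eq_zero_or_pos m with rfl | hm
    · simp [F, hk]
    · simp only [F]
      rw [integral_const_mul, gam_val _ (by positivity), one_div_pow, mul_pow (2 * Real.pi) (m : ℝ), pow_succ (m : ℝ)]
      field_simp
  have hnorm : ∀ m, ∫ t in Set.Ioi (0:ℝ), ‖F m t‖ =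
      4 * (2 * k).factorial / (2 * Real.pi) ^ (2 * k + 1) * (1 / (m:ℝ) ^ (2 * k)) := by
    intro m
    rcases Nat.eq_zero_or_pos m with rfl | hm
    · simp [F, hk]
    · have : ∀ t, ‖F m t‖ = (4 * m) * (t ^ (2 * k) * Real.exp (-(2 * Real.pi * m * t))) := by
        intro t
        simp [F, Even.pow_abs (even_two_mul k)]
      simp only [this]
      rw [integral_const_mul, gam_val _ (by positivity), one_div_pow, mul_pow (2 * Real.pi) (m : ℝ), pow_succ (m : ℝ)]
      field_simp
  have hs : Summable fun m : ℕ => ∫ t in Set.Ioi (0:ℝ), ‖F m t‖ := by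
    simp only [hnorm]
    exact (Real.summable_one_div_nat_pow.2 (by omega)).mul_left _
  have hsum := hasSum_integral_of_summable_integral_norm hF hs
  have htsum : ∫ t in Set.Ioi (0:ℝ), ∑' m, F m t =
      ∫ t in Set.Ioi (0:ℝ), t ^ (2 * k) * sech (Real.pi * t) ^ 2 := by
    refine setIntegral_congr_fun measurableSet_Ioi fun t ht => ?_
    have ht : 0 < t := ht
    have hq : ‖-Real.exp (-(2 * Real.pi * t))‖ < 1 := by
      rw [norm_neg, Real.norm_of_nonneg (Real.exp_pos _).le, Real.exp_lt_one_iff]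
      have : 0 < 2 * Real.pi * t := by positivity
      linarith
    have h := (hasSum_coe_mul_geometric_of_norm_lt_one hq).mul_left (-4 * t ^ (2 * k))
    have h2 : (fun m => F m t) = fun m : ℕ =>
        -4 * t ^ (2 * k) * (m * (-Real.exp (-(2 * Real.pi * t))) ^ m) := by
      ext m
      simp only [F]
      rw [neg_pow (Real.exp _), ← Real.exp_nat_mul]
      rw [show (m:ℝ) * -(2 * Real.pi * t) = -(2 * Real.pi * m * t) by ring]
      ring
    rw [h2, h.tsum_eq, sech_eq, sub_neg_eq_add]
    ring
  rw [htsum] at hsum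
  simp only [hval] at hsum
  have hz := (hasSum_one_div_nat_pow_mul_cos hk (x := 1/2) (by constructor <;> norm_num)).mul_left
    (-4 * (2 * k).factorial / (2 * Real.pi) ^ (2 * k + 1))
  have hcos : ∀ m : ℕ, Real.cos (2 * Real.pi * m * (1/2)) = (-1) ^ m := by
    intro m
    rw [show 2 * Real.pi * m * (1/2) = m * Real.pi by ring, Real.cos_nat_mul_pi]
  simp only [hcos] at hz
  rw [habs, hsum.unique hz]
  have he : (Polynomial.map (algebraMap ℚ ℝ) (Polynomial.bernoulli (2 * k))).eval (1/2 : ℝ) =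
      (((Polynomial.bernoulli (2 * k)).eval (1/2 : ℚ) : ℚ) : ℝ) := by
    rw [show (1/2 : ℝ) = algebraMap ℚ ℝ (1/2) by simp, Polynomial.eval_map_algebraMap,
      Polynomial.aeval_algebraMap_apply]
    simp
  rw [he]
  field_simp
  ring

lemma mom_all (j : ℕ) : Complex.I ^ j * ((∫ t : ℝ, t ^ j * sech (Real.pi * t) ^ 2 : ℝ) : ℂ) =
      2 / Real.pi * (((Polynomial.bernoulli j).eval (1/2 : ℚ) : ℚ) : ℂ) := by
  rcases Nat.even_or_odd' j with ⟨k, rfl | rfl⟩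
  · rcases eq_or_ne k 0 with rfl | hk
    · simp [mom_zero]
    · rw [mom_even k hk, pow_mul, Complex.I_sq]
      push_cast
      have : ((-1 : ℂ) ^ k) * (-1) ^ k = 1 := by rw [← mul_pow]; simp
      linear_combination (2 / (Real.pi : ℂ) * (((Polynomial.bernoulli (2 * k)).eval (1/2 : ℚ) : ℚ) : ℂ)) * this
  · have h1 : (Polynomial.bernoulli (2 * k + 1)).eval (1/2 : ℚ) = 0 := by
      have := Polynomial.bernoulli_eval_one_sub (2 * k + 1) (1/2)
      rw [Odd.neg_one_pow ⟨k, rfl⟩] at this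
      norm_num at this ⊢
      linarith
    have h2 : ∫ t : ℝ, t ^ (2 * k + 1) * sech (Real.pi * t) ^ 2 = 0 := by
      have := integral_neg_eq_self (fun t : ℝ => t ^ (2 * k + 1) * sech (Real.pi * t) ^ 2) volume
      have h3 : ∀ t : ℝ, (-t) ^ (2 * k + 1) * sech (Real.pi * -t) ^ 2 =
          -(t ^ (2 * k + 1) * sech (Real.pi * t) ^ 2) := by
        intro t
        rw [Odd.neg_pow ⟨k, rfl⟩]
        simp [sech]
      simp only [h3, integral_neg] at this
      linarith
    rw [h1, h2]; simp


theorem bernoulliPoly_eq_moment (n : ℕ) (x : ℝ) :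
    Integrable (fun t : ℝ =>
      ((x : ℂ) + Complex.I * t - 1 / 2) ^ n * ((sech (Real.pi * t) ^ 2 : ℝ) : ℂ)) ∧
    (bernoulliPoly n x : ℂ) =
      (Real.pi : ℂ) / 2 *
        ∫ t : ℝ, ((x : ℂ) + Complex.I * t - 1 / 2) ^ n * ((sech (Real.pi * t) ^ 2 : ℝ) : ℂ) := by
  have hexp : (fun t : ℝ =>
      ((x : ℂ) + Complex.I * t - 1 / 2) ^ n * ((sech (Real.pi * t) ^ 2 : ℝ) : ℂ)) =
      fun t : ℝ => ∑ m ∈ Finset.range (n + 1),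
        ((n.choose m : ℂ) * ((x : ℂ) - 1/2) ^ m * Complex.I ^ (n - m)) *
          ((t ^ (n - m) * sech (Real.pi * t) ^ 2 : ℝ) : ℂ) := by
    ext t
    rw [show (x : ℂ) + Complex.I * t - 1 / 2 = (x - 1/2) + Complex.I * t by ring, add_pow,
      Finset.sum_mul]
    refine Finset.sum_congr rfl fun m _ => ?_
    push_cast
    ring
  have hint : ∀ m ∈ Finset.range (n + 1), Integrable (fun t : ℝ =>
        ((n.choose m : ℂ) * ((x : ℂ) - 1/2) ^ m * Complex.I ^ (n - m)) *
          ((t ^ (n - m) * sech (Real.pi * t) ^ 2 : ℝ) : ℂ)) :=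
    fun m _ => (mom_int (n - m)).ofReal.const_mul _
  rw [hexp]
  refine ⟨integrable_finsetSum _ hint, ?_⟩
  rw [integral_finsetSum _ hint, bernoulliPoly, bern_taylor]
  push_cast
  rw [Finset.mul_sum]
  refine Finset.sum_congr rfl fun m _ => ?_
  have hm := mom_all (n - m)
  rw [← integral_complex_ofReal] at hm
  push_cast at hm
  rw [integral_const_mul, mul_assoc _ (Complex.I ^ (n - m)), hm]
  have : (Real.pi : ℂ) ≠ 0 := by exact_mod_cast Real.pi_ne_zero
  field_simp
end
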